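/- arXiv:math/0509438 — 2 statements merged into one kernel-verified Lean document; each statement's English description precedes it below -/
import Mathlib

section
/- Let D be a category with finite products and terminal object p, G, G', G'' group objects of D, a: M×G → M a right action of G on an object M, and let f: M → G' and f': G' → G'' be arrows of D. Form the difference arrow Δf: M×G → G' of f with respect to the action a, and the difference arrow Δf': G'×G' → G'' of f' with respect to the right translation action of G' on itself (x·h := m'∘(x,h)). Then the chain rule Δ(f'∘f)∘(u,g) = Δf'∘(f∘u, Δf∘(u,g)) holds for all arrows u: Z → M and g: Z → G; equivalently, Δ(f'∘f) = Δf'∘(f∘pr_M, Δf) as arrows M×G → G''. -/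
open CategoryTheory CategoryTheory.Limits

noncomputable section

universe v u

namespace DiffCalc

variable {D : Type u} [Category.{v} D] [HasTerminal D] [HasBinaryProducts D]

/-- The multiplication of two generalized elements `a, b : Z ⟶ X` induced by an arrow
`m : X ⨯ X ⟶ X`. -/
def gmul {X Z : D} (m : X ⨯ X ⟶ X) (a b : Z ⟶ X) : Z ⟶ X :=
  prod.lift a b ≫ m

/-- A group object structure on an object `X` of a category with finite products, with the
group axioms expressed for (generic) generalized elements. -/
structure GroupStr (X : D) where
  mul : X ⨯ X ⟶ X
  inv : X ⟶ X
  one : ⊤_ D ⟶ X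
  mul_assoc' : ∀ {Z : D} (a b c : Z ⟶ X),
    gmul mul (gmul mul a b) c = gmul mul a (gmul mul b c)
  one_mul' : ∀ {Z : D} (a : Z ⟶ X), gmul mul (terminal.from Z ≫ one) a = a
  mul_one' : ∀ {Z : D} (a : Z ⟶ X), gmul mul a (terminal.from Z ≫ one) = a
  mul_inv' : ∀ {Z : D} (a : Z ⟶ X), gmul mul a (a ≫ inv) = terminal.from Z ≫ one
  inv_mul' : ∀ {Z : D} (a : Z ⟶ X), gmul mul (a ≫ inv) a = terminal.from Z ≫ one

/-- The unit generalized element `1 : Z ⟶ X` of a group object. -/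
def gone {X : D} (s : GroupStr X) (Z : D) : Z ⟶ X :=
  terminal.from Z ≫ s.one

/-- The group of generalized elements `Z ⟶ X` of a group object `X`. -/
def homGroup {X : D} (s : GroupStr X) (Z : D) : Group (Z ⟶ X) where
  mul a b := gmul s.mul a b
  one := gone s Z
  inv a := a ≫ s.inv
  mul_assoc := s.mul_assoc'
  one_mul := s.one_mul'
  mul_one := s.mul_one'
  inv_mul_cancel := s.inv_mul'

/-- A morphism of group objects, in generalized-element form. -/
structure IsGroupHom {X Y : D} (sX : GroupStr X) (sY : GroupStr Y) (f : X ⟶ Y) : Prop where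
  map_mul : ∀ {Z : D} (a b : Z ⟶ X), gmul sX.mul a b ≫ f = gmul sY.mul (a ≫ f) (b ≫ f)
  map_inv : ∀ {Z : D} (a : Z ⟶ X), (a ≫ sX.inv) ≫ f = (a ≫ f) ≫ sY.inv
  map_one : ∀ (Z : D), gone sX Z ≫ f = gone sY Z

/-- A `U`-family of morphisms of group objects `l : U ⨯ G ⟶ G'`, in
generalized-element form. -/
structure IsGroupHomFamily {U G G' : D} (sG : GroupStr G) (sG' : GroupStr G')
    (l : U ⨯ G ⟶ G') : Prop where
  map_mul : ∀ {Z : D} (u : Z ⟶ U) (g₁ g₂ : Z ⟶ G),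
    prod.lift u (gmul sG.mul g₁ g₂) ≫ l =
      gmul sG'.mul (prod.lift u g₁ ≫ l) (prod.lift u g₂ ≫ l)
  map_inv : ∀ {Z : D} (u : Z ⟶ U) (g : Z ⟶ G),
    prod.lift u (g ≫ sG.inv) ≫ l = (prod.lift u g ≫ l) ≫ sG'.inv
  map_one : ∀ {Z : D} (u : Z ⟶ U), prod.lift u (gone sG Z) ≫ l = gone sG' Z

/-- A right action of a group object `G` on an object `M`, in generalized-element form. -/
structure IsRightAction {G M : D} (s : GroupStr G) (a : M ⨯ G ⟶ M) : Prop where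
  act_act : ∀ {Z : D} (m : Z ⟶ M) (g₁ g₂ : Z ⟶ G),
    prod.lift (prod.lift m g₁ ≫ a) g₂ ≫ a = prod.lift m (gmul s.mul g₁ g₂) ≫ a
  act_one : ∀ {Z : D} (m : Z ⟶ M), prod.lift m (gone s Z) ≫ a = m

/-- The difference arrow `Δf : M ⨯ G ⟶ G'` of `f : M ⟶ G'` with respect to a right action
`a : M ⨯ G ⟶ M`:  `Δf(u,g) = (f u)⁻¹ ⬝ f (u ⬝ g)`. -/
def diffArrow {M G G' : D} (sG' : GroupStr G') (a : M ⨯ G ⟶ M) (f : M ⟶ G') :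
    M ⨯ G ⟶ G' :=
  gmul sG'.mul ((prod.fst ≫ f) ≫ sG'.inv) (a ≫ f)


/-- chain rule for difference arrows.  If `Δf` is taken with respect to a
right action `a` of `G` on `M` and `Δf'` with respect to the right translation action of
`G'` on itself, then `Δ(f'∘f)(u,g) = Δf'(f∘u, Δf(u,g))`, i.e.
`Δ(f'∘f) = Δf' ∘ (f∘pr_M, Δf)`. -/
theorem diffArrow_chain_rule
    {D : Type u} [Category.{v} D] [HasTerminal D] [HasBinaryProducts D]
    {G G' G'' M : D} (sG : GroupStr G) (sG' : GroupStr G') (sG'' : GroupStr G'')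
    (a : M ⨯ G ⟶ M) (ha : IsRightAction sG a) (f : M ⟶ G') (f' : G' ⟶ G'') :
    (∀ (Z : D) (u : Z ⟶ M) (g : Z ⟶ G),
      prod.lift u g ≫ diffArrow sG'' a (f ≫ f') =
        prod.lift (u ≫ f) (prod.lift u g ≫ diffArrow sG' a f) ≫
          diffArrow sG'' sG'.mul f') ∧
    (diffArrow sG'' a (f ≫ f') =
      prod.lift (prod.fst ≫ f) (diffArrow sG' a f) ≫ diffArrow sG'' sG'.mul f') := by
  have key : prod.lift (prod.fst ≫ f) (diffArrow sG' a f) ≫ sG'.mul = a ≫ f := by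
    change gmul sG'.mul (prod.fst ≫ f) (gmul sG'.mul ((prod.fst ≫ f) ≫ sG'.inv) (a ≫ f)) = _
    rw [← sG'.mul_assoc', sG'.mul_inv', sG'.one_mul']
  have main : diffArrow sG'' a (f ≫ f') =
      prod.lift (prod.fst ≫ f) (diffArrow sG' a f) ≫ diffArrow sG'' sG'.mul f' := by
    conv_rhs => rw [diffArrow.eq_def sG'' sG'.mul f', gmul, ← Category.assoc, prod.comp_lift,
      ← Category.assoc _ sG'.mul, key, ← Category.assoc, ← Category.assoc, prod.lift_fst]
    simp only [diffArrow, gmul, Category.assoc]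
  refine ⟨fun Z u g => ?_, main⟩
  rw [main, ← Category.assoc, prod.comp_lift, ← Category.assoc, prod.lift_fst]

end DiffCalc
end
end

section
/- Let D be a category with finite products and terminal object p, let G₁, …, Gₙ be group objects of D with product group object G = G₁×…×Gₙ, let a: M×G → M be a right action of G on an object M, and let f: M → G' be an arrow to a group object G'. For α = 1,…,n let i_α: G_α → G be the canonical injection i_α(x) = (1,…,x,…,1), and define the α-th partial difference Δ_αf: M×G_α → G' by Δ_αf(u, g_α) := Δf(u, i_α∘g_α). Then: (i) for all arrows u': Z → M and g': Z → G_α, Δ_αf∘(u',g') = (f∘u')^{-1}·(f∘(a∘(u', i_α∘g'))) in Hom(Z,G'); and (ii) for all arrows u: Z → M and g_α: Z → G_α (α = 1,…,n), Δf∘(u, (g₁,…,gₙ)) = Δ₁f(u, g₁) · Δ₂f(u·i₁g₁, g₂) · … · Δₙf(u·i₁g₁·…·i_{n-1}g_{n-1}, gₙ) in the group Hom(Z,G'), where u·x denotes the action a and the dot between factors is multiplication in Hom(Z,G'). -/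
open CategoryTheory CategoryTheory.Limits

noncomputable section

universe v u

namespace DiffCalc

variable {D : Type u} [Category.{v} D] [HasTerminal D] [HasBinaryProducts D]

section Statement13

variable {D : Type u} [Category.{v} D] [HasTerminal D] [HasBinaryProducts D]
  [HasFiniteProducts D]

variable {n : ℕ} {Gs : Fin n → D}

/-- The canonical injection `i_α : G_α ⟶ G₁ × ⋯ × Gₙ`, `i_α(x) = (1,…,x,…,1)`. -/
def canInj (strs : ∀ α, GroupStr (Gs α)) (α : Fin n) : Gs α ⟶ ∏ᶜ Gs :=
  Pi.lift (fun β => if h : α = β then eqToHom (congrArg Gs h) else gone (strs β) (Gs α))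

/-- The `α`-th partial difference arrow `Δ_α f := Δf ∘ (pr_M, i_α ∘ pr_{G_α})`. -/
def partialDiffArrow {M G' : D} (strs : ∀ α, GroupStr (Gs α)) (sG' : GroupStr G')
    (a : M ⨯ (∏ᶜ Gs) ⟶ M) (f : M ⟶ G') (α : Fin n) : M ⨯ Gs α ⟶ G' :=
  prod.map (𝟙 M) (canInj strs α) ≫ diffArrow sG' a f

/-- The iterated action points `u, u·i₁g₁, u·i₁g₁·i₂g₂, …`. -/
def actPts {M Z : D} (a : M ⨯ (∏ᶜ Gs) ⟶ M) (inj : ∀ α, Gs α ⟶ ∏ᶜ Gs)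
    (u : Z ⟶ M) (gs : ∀ α, Z ⟶ Gs α) : ℕ → (Z ⟶ M)
  | 0 => u
  | k + 1 =>
      if h : k < n then
        prod.lift (actPts a inj u gs k) (gs ⟨k, h⟩ ≫ inj ⟨k, h⟩) ≫ a
      else actPts a inj u gs k

theorem ofFn_telescope {H : Type*} [Group H] (F : ℕ → H) (n : ℕ) :
    (List.ofFn (fun α : Fin n => (F α.1)⁻¹ * F (α.1 + 1))).prod = (F 0)⁻¹ * F n := by
  induction n with
  | zero => simp
  | succ k ih =>
    rw [List.ofFn_succ', List.concat_eq_append, List.prod_append]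
    simp only [Fin.val_castSucc, Fin.val_last, List.prod_singleton]
    rw [ih]
    group

theorem comp_gmul {X Y Z : D} (m : X ⨯ X ⟶ X) (w : Y ⟶ Z) (b c : Z ⟶ X) :
    w ≫ gmul m b c = gmul m (w ≫ b) (w ≫ c) := by
  simp only [gmul, ← Category.assoc, prod.comp_lift]

theorem comp_gone {X Y Z : D} (s : GroupStr X) (w : Y ⟶ Z) :
    w ≫ gone s Z = gone s Y := by
  simp only [gone, ← Category.assoc, terminal.comp_from]

theorem lift_diffArrow {M G G' Z : D} (sG' : GroupStr G') (a : M ⨯ G ⟶ M) (f : M ⟶ G')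
    (u : Z ⟶ M) (g : Z ⟶ G) :
    prod.lift u g ≫ diffArrow sG' a f =
      gmul sG'.mul ((u ≫ f) ≫ sG'.inv) ((prod.lift u g ≫ a) ≫ f) := by
  rw [diffArrow, comp_gmul]
  simp only [← Category.assoc, prod.lift_fst]

/-- The partial products `(g₁,…,g_k,1,…,1)`. -/
def truncPt {Z : D} (strs : ∀ α, GroupStr (Gs α)) (gs : ∀ α, Z ⟶ Gs α) (k : ℕ) : Z ⟶ ∏ᶜ Gs :=
  Pi.lift (fun β => if β.1 < k then gs β else gone (strs β) Z)

theorem truncPt_succ {Z : D} (strs : ∀ α, GroupStr (Gs α)) (sP : GroupStr (∏ᶜ Gs))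
    (hmul : ∀ α, sP.mul ≫ Pi.π Gs α =
      gmul (strs α).mul (prod.fst ≫ Pi.π Gs α) (prod.snd ≫ Pi.π Gs α))
    (gs : ∀ α, Z ⟶ Gs α) (k : ℕ) (h : k < n) :
    gmul sP.mul (truncPt strs gs k) (gs ⟨k, h⟩ ≫ canInj strs ⟨k, h⟩) =
      truncPt strs gs (k + 1) := by
  apply Pi.hom_ext
  intro β
  rw [gmul, Category.assoc, hmul, comp_gmul, prod.lift_fst_assoc, prod.lift_snd_assoc]
  simp only [truncPt, canInj, Category.assoc, Pi.lift_π]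
  by_cases hk : (⟨k, h⟩ : Fin n) = β
  · subst hk
    simp only [lt_irrefl, if_false, dif_pos, eqToHom_refl, Category.comp_id, Nat.lt_succ_self,
      if_true]
    exact (strs _).one_mul' _
  · rw [dif_neg hk, comp_gone]
    have hne : β.1 ≠ k := fun e => hk (Fin.ext e.symm)
    have : (β.1 < k + 1) = (β.1 < k) := by
      apply propext; omega
    simp only [this]
    exact (strs _).mul_one' _

theorem actPts_eq {M Z : D} (strs : ∀ α, GroupStr (Gs α)) (sP : GroupStr (∏ᶜ Gs))
    (hmul : ∀ α, sP.mul ≫ Pi.π Gs α =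
      gmul (strs α).mul (prod.fst ≫ Pi.π Gs α) (prod.snd ≫ Pi.π Gs α))
    (hone : ∀ α, sP.one ≫ Pi.π Gs α = (strs α).one)
    (a : M ⨯ (∏ᶜ Gs) ⟶ M) (ha : IsRightAction sP a)
    (u : Z ⟶ M) (gs : ∀ α, Z ⟶ Gs α) (k : ℕ) (hk : k ≤ n) :
    actPts a (canInj strs) u gs k = prod.lift u (truncPt strs gs k) ≫ a := by
  induction k with
  | zero =>
    have : truncPt strs gs 0 = gone sP Z := by
      apply Pi.hom_ext
      intro β
      simp [truncPt, gone, hone]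
    rw [this, ha.act_one, actPts]
  | succ k ih =>
    have h : k < n := hk
    rw [actPts, dif_pos h, ih h.le, ha.act_act, truncPt_succ strs sP hmul gs k h]

/-- (i) the pointwise formula for the `α`-th partial difference arrow, and
(ii) the expression of `Δf` as the ordered product of the partial differences
`Δ_α f` evaluated at the successively translated points. -/
theorem partialDiffArrow_formulas {M G' : D}
    (strs : ∀ α, GroupStr (Gs α)) (sP : GroupStr (∏ᶜ Gs)) (sG' : GroupStr G')
    (hmul : ∀ α, sP.mul ≫ Pi.π Gs α =
      gmul (strs α).mul (prod.fst ≫ Pi.π Gs α) (prod.snd ≫ Pi.π Gs α))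
    (hinv : ∀ α, sP.inv ≫ Pi.π Gs α = Pi.π Gs α ≫ (strs α).inv)
    (hone : ∀ α, sP.one ≫ Pi.π Gs α = (strs α).one)
    (a : M ⨯ (∏ᶜ Gs) ⟶ M) (ha : IsRightAction sP a) (f : M ⟶ G') :
    (∀ (α : Fin n) (Z : D) (u' : Z ⟶ M) (g' : Z ⟶ Gs α),
      prod.lift u' g' ≫ partialDiffArrow strs sG' a f α =
        gmul sG'.mul ((u' ≫ f) ≫ sG'.inv)
          ((prod.lift u' (g' ≫ canInj strs α) ≫ a) ≫ f)) ∧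
    (∀ (Z : D) (u : Z ⟶ M) (gs : ∀ α, Z ⟶ Gs α),
      letI : Group (Z ⟶ G') := homGroup sG' Z
      prod.lift u (Pi.lift gs) ≫ diffArrow sG' a f =
        (List.ofFn (fun α : Fin n =>
          prod.lift (actPts a (canInj strs) u gs α.1) (gs α) ≫
            partialDiffArrow strs sG' a f α)).prod) := by
  have h1 : ∀ (α : Fin n) (Z : D) (u' : Z ⟶ M) (g' : Z ⟶ Gs α),
      prod.lift u' g' ≫ partialDiffArrow strs sG' a f α =
        gmul sG'.mul ((u' ≫ f) ≫ sG'.inv)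
          ((prod.lift u' (g' ≫ canInj strs α) ≫ a) ≫ f) := by
    intro α Z u' g'
    rw [partialDiffArrow, prod.lift_map_assoc, Category.comp_id, lift_diffArrow]
  refine ⟨h1, ?_⟩
  intro Z u gs
  letI : Group (Z ⟶ G') := homGroup sG' Z
  have hn : prod.lift u (Pi.lift gs) ≫ a = actPts a (canInj strs) u gs n := by
    rw [actPts_eq strs sP hmul hone a ha u gs n le_rfl]
    simp [truncPt]
  have ht := ofFn_telescope (fun k => actPts a (canInj strs) u gs k ≫ f) n
  have hf : (fun α : Fin n => prod.lift (actPts a (canInj strs) u gs α.1) (gs α) ≫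
        partialDiffArrow strs sG' a f α) =
      (fun α : Fin n => (actPts a (canInj strs) u gs α.1 ≫ f)⁻¹ *
        (actPts a (canInj strs) u gs (α.1 + 1) ≫ f)) := by
    funext α
    rw [h1, actPts, dif_pos α.2]
    rfl
  rw [hf]
  refine Eq.trans ?_ ht.symm
  rw [lift_diffArrow, hn]
  rfl

end Statement13

end DiffCalc
end
end
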